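/- Let n ≥ 2 be an integer and let η be the admissible reactive profile. Then z^δ η(z) → λ as z → ∞, where δ = (n+2)/(n−1) and λ = (δ(δ+1)/(2κ)^n)^{1/(n−1)}; moreover there exists a constant λ_∞ ∈ ℝ such that z^{δ'} (η(z) − λ z^{−δ}) → λ_∞ as z → ∞, where δ' = (√(4nδ(δ+1)+1) − 1)/2 if 2 ≤ n ≤ 5 and δ' = 2δ + 1 if n ≥ 6. -/

import Mathlib

noncomputable def kap : ℝ := 1 / Real.sqrt Real.pi

noncomputable def del (n : ℕ) : ℝ := ((n : ℝ) + 2) / ((n : ℝ) - 1)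

noncomputable def lam (n : ℕ) : ℝ :=
  (del n * (del n + 1) / (2 * kap) ^ n) ^ (1 / ((n : ℝ) - 1))

noncomputable def delp (n : ℕ) : ℝ :=
  if n ≤ 5 then (Real.sqrt (4 * (n : ℝ) * del n * (del n + 1) + 1) - 1) / 2
  else 2 * del n + 1

def IsReactiveProfile (n : ℕ) (η : ℝ → ℝ) : Prop :=
  ContDiffOn ℝ 2 η (Set.Ici 0) ∧
  (∀ z ∈ Set.Ici (0:ℝ), 0 < η z) ∧
  (∀ z ∈ Set.Ici (0:ℝ),
    derivWithin (derivWithin η (Set.Ici 0)) (Set.Ici 0) z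
      = (2 * kap * z * η z + (η z) ^ 2) ^ n) ∧
  derivWithin η (Set.Ici 0) 0 = -kap ∧
  Filter.Tendsto η Filter.atTop (nhds 0)

open Filter Topology Set


lemma rp_comp {Z : ℝ} {f f1 f2 : ℝ → ℝ} (hc : ContinuousOn f (Ici Z))
    (h1 : ∀ z > Z, HasDerivAt f (f1 z) z) (h2 : ∀ z > Z, HasDerivAt f1 (f2 z) z)
    (h0 : Tendsto f atTop (𝓝 0)) (hZ : f Z ≤ 0) (hp : ∀ z > Z, 0 < f z → 0 < f2 z) :
    ∀ z ≥ Z, f z ≤ 0 := by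
  intro x hx
  by_contra! hfx
  obtain ⟨N, hN⟩ := (((h0.eventually (gt_mem_nhds hfx)).and (eventually_gt_atTop x))).exists
  obtain ⟨hN1, hN2⟩ := hN
  obtain ⟨m, hm, hmax⟩ := isCompact_Icc.exists_isMaxOn (s := Icc Z N) (f := f)
    ⟨x, hx, hN2.le⟩ (hc.mono Icc_subset_Ici_self)
  have hmx : f x ≤ f m := hmax ⟨hx, hN2.le⟩
  have hmZ : Z < m := lt_of_le_of_ne hm.1 (by rintro rfl; linarith)
  have hmN : m < N := lt_of_le_of_ne hm.2 (by rintro rfl; linarith)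
  have hlm : IsLocalMax f m := hmax.isLocalMax (Icc_mem_nhds hmZ hmN)
  have hf1 : f1 m = 0 := hlm.hasDerivAt_eq_zero (h1 m hmZ)
  have hf2 := hp m hmZ (by linarith)
  have hev : deriv f =ᶠ[𝓝 m] f1 := by
    filter_upwards [lt_mem_nhds hmZ] with z hz using (h1 z hz).deriv
  have hlmin : IsLocalMin f m := by
    apply isLocalMin_of_deriv_deriv_pos
    · rw [hev.deriv_eq, (h2 m hmZ).deriv]; exact hf2
    · rw [(h1 m hmZ).deriv, hf1]
    · exact (h1 m hmZ).continuousAt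
  have hconst : f =ᶠ[𝓝 m] fun _ => f m := by
    filter_upwards [hlm, hlmin] with z h h' using le_antisymm h h'
  have h3 : deriv f =ᶠ[𝓝 m] fun _ => 0 := by
    filter_upwards [hconst.deriv] with z hz
    simpa using hz
  have : deriv (deriv f) m = 0 := by rw [h3.deriv_eq]; simp
  rw [hev.deriv_eq, (h2 m hmZ).deriv] at this
  linarith

lemma rp_lin {Z Q : ℝ} (hZ0 : 0 ≤ Z) (hQ : 0 < Q) {v v1 v2 w w1 w2 : ℝ → ℝ}
    (hvc : ContinuousOn v (Ici Z)) (hwc : ContinuousOn w (Ici Z))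
    (h1 : ∀ z > Z, HasDerivAt v (v1 z) z) (h2 : ∀ z > Z, HasDerivAt v1 (v2 z) z)
    (g1 : ∀ z > Z, HasDerivAt w (w1 z) z) (g2 : ∀ z > Z, HasDerivAt w1 (w2 z) z)
    (hv0 : Tendsto v atTop (𝓝 0)) (hw0 : Tendsto w atTop (𝓝 0))
    (hZ : v Z ≤ w Z)
    (hp : ∀ z > Z, w2 z - Q * w z / z ^ 2 ≤ v2 z - Q * v z / z ^ 2) :
    ∀ z ≥ Z, v z ≤ w z := by
  intro z hz
  have := rp_comp (f := fun z => v z - w z) (hvc.sub hwc)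
    (fun z hz => (h1 z hz).sub (g1 z hz)) (fun z hz => (h2 z hz).sub (g2 z hz))
    (by simpa using hv0.sub hw0) (by simpa using hZ) (by
      intro z hz h
      have := hp z hz
      have hz0 : 0 < z := by linarith
      have : 0 < Q * (v z - w z) / z ^ 2 := by positivity
      have e : Q * (v z - w z) / z ^ 2 = Q * v z / z ^ 2 - Q * w z / z ^ 2 := by ring
      linarith) z hz
  linarith

lemma rp_d1 (c a : ℝ) {z : ℝ} (hz : 0 < z) :
    HasDerivAt (fun z : ℝ => c * z ^ (-a)) (c * (-a) * z ^ (-a - 1)) z := by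
  have := (Real.hasDerivAt_rpow_const (x := z) (p := -a) (Or.inl hz.ne')).const_mul c
  exact this.congr_deriv (by ring)

lemma rp_d2 (c a : ℝ) {z : ℝ} (hz : 0 < z) :
    HasDerivAt (fun z : ℝ => c * (-a) * z ^ (-a - 1)) (c * a * (a + 1) * z ^ (-a) / z ^ 2) z := by
  have := (Real.hasDerivAt_rpow_const (x := z) (p := -a - 1) (Or.inl hz.ne')).const_mul (c * (-a))
  refine this.congr_deriv ?_
  have : z ^ (-a - 1 - 1) = z ^ (-a) / z ^ 2 := by
    rw [show -a - 1 - 1 = -a - (2 : ℕ) by push_cast; ring, Real.rpow_sub_natCast hz.ne']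
  rw [this]; ring

lemma rp_t0 (c : ℝ) {a : ℝ} (ha : 0 < a) :
    Tendsto (fun z : ℝ => c * z ^ (-a)) atTop (𝓝 0) := by
  simpa using (tendsto_rpow_neg_atTop ha).const_mul c

lemma rp_bound1 {a p K : ℝ} (ha : 0 < a) (hap : a < p) (hK : 0 ≤ K) {v v1 v2 : ℝ → ℝ}
    (h1 : ∀ z > 0, HasDerivAt v (v1 z) z) (h2 : ∀ z > 0, HasDerivAt v1 (v2 z) z)
    (hv0 : Tendsto v atTop (𝓝 0))
    (hg : ∀ z ≥ 1, -(K * z ^ (-a) / z ^ 2) ≤ v2 z - (p * (p + 1)) * v z / z ^ 2) :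
    ∃ M ≥ 0, ∀ z ≥ 1, v z ≤ M * z ^ (-a) := by
  have hd : 0 < p * (p + 1) - a * (a + 1) := by nlinarith
  set M := K / (p * (p + 1) - a * (a + 1)) + |v 1| with hM
  have hM0 : 0 ≤ K / (p * (p + 1) - a * (a + 1)) := by positivity
  refine ⟨M, by positivity, ?_⟩
  have hp0 : 0 < p := by linarith
  refine rp_lin (Q := p * (p + 1)) (v := v) (v1 := v1) (v2 := v2) (w := fun z => M * z ^ (-a))
    (w1 := fun z => M * (-a) * z ^ (-a - 1)) (w2 := fun z => M * a * (a + 1) * z ^ (-a) / z ^ 2)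
    zero_le_one (by positivity) ?_ ?_ ?_ ?_ ?_ ?_ ?_ ?_ ?_ ?_
  · intro z hz; exact (h1 z (by linarith [mem_Ici.1 hz])).continuousAt.continuousWithinAt
  · intro z hz; exact (rp_d1 M a (by linarith [mem_Ici.1 hz])).continuousAt.continuousWithinAt
  · intro z hz; exact h1 z (by linarith)
  · intro z hz; exact h2 z (by linarith)
  · intro z hz; exact rp_d1 M a (by linarith)
  · intro z hz; exact rp_d2 M a (by linarith)
  · exact hv0
  · exact rp_t0 _ ha
  · simp only [Real.one_rpow, mul_one]
    linarith [le_abs_self (v 1)]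
  · intro z hz
    refine le_trans ?_ (hg z hz.le)
    have hz0 : 0 < z := by linarith
    have hP : 0 ≤ z ^ (-a) / z ^ 2 := by positivity
    have hMK : K ≤ M * (p * (p + 1) - a * (a + 1)) := by
      rw [hM, add_mul, div_mul_cancel₀ _ hd.ne']
      have : 0 ≤ |v 1| * (p * (p + 1) - a * (a + 1)) := by positivity
      linarith
    have := mul_le_mul_of_nonneg_right hMK hP
    have e : M * a * (a + 1) * z ^ (-a) / z ^ 2 - p * (p + 1) * (M * z ^ (-a)) / z ^ 2
      = - (M * (p * (p + 1) - a * (a + 1)) * (z ^ (-a) / z ^ 2)) := by ring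
    have e2 : K * z ^ (-a) / z ^ 2 = K * (z ^ (-a) / z ^ 2) := by ring
    simp only [e, e2]
    linarith

lemma rp_bound {a p K : ℝ} (ha : 0 < a) (hap : a < p) (hK : 0 ≤ K) {v v1 v2 : ℝ → ℝ}
    (h1 : ∀ z > 0, HasDerivAt v (v1 z) z) (h2 : ∀ z > 0, HasDerivAt v1 (v2 z) z)
    (hv0 : Tendsto v atTop (𝓝 0))
    (hg : ∀ z ≥ 1, |v2 z - (p * (p + 1)) * v z / z ^ 2| ≤ K * z ^ (-a) / z ^ 2) :
    ∃ M ≥ 0, ∀ z ≥ 1, |v z| ≤ M * z ^ (-a) := by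
  obtain ⟨M, hM0, hM⟩ := rp_bound1 ha hap hK h1 h2 hv0 (fun z hz => (abs_le.1 (hg z hz)).1)
  obtain ⟨M', hM0', hM'⟩ := rp_bound1 (v := fun z => - v z) ha hap hK (fun z hz => (h1 z hz).neg)
    (fun z hz => (h2 z hz).neg) (by simpa using hv0.neg) (fun z hz => by
      have := (abs_le.1 (hg z hz)).2
      have e : - v2 z - p * (p + 1) * (- v z) / z ^ 2 = -(v2 z - p * (p + 1) * v z / z ^ 2) := by ring
      rw [e]; linarith)
  refine ⟨M + M', by positivity, fun z hz => ?_⟩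
  have hz0 : 0 < z := by linarith
  have hP : 0 ≤ z ^ (-a) := by positivity
  rw [abs_le]
  constructor <;> nlinarith [hM z hz, hM' z hz, mul_nonneg hM0 hP, mul_nonneg hM0' hP]

lemma rp_cauchy1 {a p K : ℝ} (hp : 0 < p) (hap : p < a) (hK : 0 ≤ K) {v v1 v2 : ℝ → ℝ}
    (h1 : ∀ z > 0, HasDerivAt v (v1 z) z) (h2 : ∀ z > 0, HasDerivAt v1 (v2 z) z)
    (hv0 : Tendsto v atTop (𝓝 0))
    (hg : ∀ z ≥ 1, -(K * z ^ (-a) / z ^ 2) ≤ v2 z - (p * (p + 1)) * v z / z ^ 2) :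
    ∃ M ≥ 0, ∀ Z ≥ 1, ∀ z ≥ Z, z ^ p * v z - Z ^ p * v Z ≤ M * Z ^ (p - a) := by
  have hd : 0 < a * (a + 1) - p * (p + 1) := by nlinarith
  set M := K / (a * (a + 1) - p * (p + 1)) with hM
  have hM0 : 0 ≤ M := by positivity
  refine ⟨M, hM0, ?_⟩
  intro Z hZ
  have hZ0 : 0 < Z := by linarith
  set c := v Z * Z ^ p + M * Z ^ (p - a) with hc
  have key : ∀ z ≥ Z, v z ≤ c * z ^ (-p) + (-M) * z ^ (-a) := by
    refine rp_lin (Q := p * (p + 1)) (v := v) (v1 := v1) (v2 := v2)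
      (w := fun z => c * z ^ (-p) + (-M) * z ^ (-a))
      (w1 := fun z => c * (-p) * z ^ (-p - 1) + (-M) * (-a) * z ^ (-a - 1))
      (w2 := fun z => c * p * (p + 1) * z ^ (-p) / z ^ 2 + (-M) * a * (a + 1) * z ^ (-a) / z ^ 2)
      hZ0.le (by positivity) ?_ ?_ ?_ ?_ ?_ ?_ ?_ ?_ ?_ ?_
    · intro z hz; exact (h1 z (by linarith [mem_Ici.1 hz])).continuousAt.continuousWithinAt
    · intro z hz
      exact ((rp_d1 c p (by linarith [mem_Ici.1 hz])).add
        (rp_d1 (-M) a (by linarith [mem_Ici.1 hz]))).continuousAt.continuousWithinAt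
    · intro z hz; exact h1 z (by linarith)
    · intro z hz; exact h2 z (by linarith)
    · intro z hz; exact (rp_d1 c p (by linarith)).add (rp_d1 (-M) a (by linarith))
    · intro z hz; exact (rp_d2 c p (by linarith)).add (rp_d2 (-M) a (by linarith))
    · exact hv0
    · simpa using (rp_t0 c hp).add (rp_t0 (-M) (hp.trans hap))
    · rw [hc, add_mul, mul_assoc, mul_assoc, ← Real.rpow_add hZ0, ← Real.rpow_add hZ0, show p - a + -p = -a by ring]
      simp
    · intro z hz
      refine le_trans (le_of_eq ?_) (hg z (by linarith))
      have hz0 : 0 < z := by linarith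
      have hMK : K = M * (a * (a + 1) - p * (p + 1)) := by
        rw [hM, div_mul_cancel₀ _ hd.ne']
      rw [hMK]; ring
  intro z hz
  have hz0 : 0 < z := by linarith
  have h := mul_le_mul_of_nonneg_left (key z hz) (Real.rpow_nonneg hz0.le p)
  have e : z ^ p * z ^ (-p) = 1 := by rw [← Real.rpow_add hz0]; simp
  have hpos : 0 ≤ M * (z ^ p * z ^ (-a)) := by positivity
  have e2 : z ^ p * (c * z ^ (-p) + (-M) * z ^ (-a)) = c * (z ^ p * z ^ (-p)) - M * (z ^ p * z ^ (-a)) := by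
    ring
  rw [e2, e] at h
  linarith

lemma rp_cauchy {a p K : ℝ} (hp : 0 < p) (hap : p < a) (hK : 0 ≤ K) {v v1 v2 : ℝ → ℝ}
    (h1 : ∀ z > 0, HasDerivAt v (v1 z) z) (h2 : ∀ z > 0, HasDerivAt v1 (v2 z) z)
    (hv0 : Tendsto v atTop (𝓝 0))
    (hg : ∀ z ≥ 1, |v2 z - (p * (p + 1)) * v z / z ^ 2| ≤ K * z ^ (-a) / z ^ 2) :
    ∃ l, Tendsto (fun z => z ^ p * v z) atTop (𝓝 l) := by
  obtain ⟨M, hM0, hM⟩ := rp_cauchy1 hp hap hK h1 h2 hv0 (fun z hz => (abs_le.1 (hg z hz)).1)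
  obtain ⟨M', hM0', hM'⟩ := rp_cauchy1 (v := fun z => - v z) hp hap hK (fun z hz => (h1 z hz).neg)
    (fun z hz => (h2 z hz).neg) (by simpa using hv0.neg) (fun z hz => by
      have := (abs_le.1 (hg z hz)).2
      have e : - v2 z - p * (p + 1) * (- v z) / z ^ 2 = -(v2 z - p * (p + 1) * v z / z ^ 2) := by ring
      rw [e]; linarith)
  apply cauchySeq_tendsto_of_complete
  rw [Metric.cauchySeq_iff']
  intro ε hε
  have ht : Tendsto (fun Z : ℝ => (M + M') * Z ^ (-(a - p))) atTop (𝓝 0) := rp_t0 _ (by linarith)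
  obtain ⟨Z, hZ, hZ1⟩ := ((ht.eventually (gt_mem_nhds hε)).and (eventually_ge_atTop 1)).exists
  refine ⟨Z, fun z hz => ?_⟩
  have hZ0 : 0 < Z := by linarith
  have A := hM Z hZ1 z hz
  have B := hM' Z hZ1 z hz
  rw [show -(a - p) = p - a by ring] at hZ
  have hP : 0 ≤ Z ^ (p - a) := by positivity
  rw [Real.dist_eq, abs_lt]
  constructor <;> nlinarith [mul_nonneg hM0 hP, mul_nonneg hM0' hP]

lemma rp_taylor (n : ℕ) (B : ℝ) (hB : 0 ≤ B) :
    ∃ C ≥ 0, ∀ X : ℝ, |X| ≤ B → |(1 + X) ^ n - 1 - n * X| ≤ C * X ^ 2 := by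
  induction n with
  | zero => exact ⟨0, le_rfl, fun X _ => by simp⟩
  | succ k ih =>
    obtain ⟨C, hC, h⟩ := ih
    refine ⟨(1 + B) * C + k, by positivity, fun X hX => ?_⟩
    have e : (1 + X) ^ (k + 1) - 1 - ((k + 1 : ℕ) : ℝ) * X
      = (1 + X) * ((1 + X) ^ k - 1 - k * X) + k * X ^ 2 := by push_cast; ring
    rw [e]
    refine (abs_add_le _ _).trans ?_
    rw [abs_mul, abs_of_nonneg (by positivity : 0 ≤ (k : ℝ) * X ^ 2)]
    have h1 : |1 + X| ≤ 1 + B := (abs_add_le _ _).trans (by simpa using hX)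
    have := mul_le_mul h1 (h X hX) (abs_nonneg _) (by positivity)
    linarith

lemma rp_kap : 0 < kap := by unfold kap; positivity

lemma rp_del {n : ℕ} (hn : 2 ≤ n) : (n : ℝ) * del n = n + 2 + del n := by
  have : (2 : ℝ) ≤ n := by exact_mod_cast hn
  have h : (n : ℝ) - 1 ≠ 0 := by linarith
  unfold del; field_simp; ring

lemma rp_del1 {n : ℕ} (hn : 2 ≤ n) : 1 < del n := by
  have : (2 : ℝ) ≤ n := by exact_mod_cast hn
  unfold del
  rw [lt_div_iff₀ (by linarith)]; linarith

lemma rp_lam {n : ℕ} (hn : 2 ≤ n) : 0 < lam n := by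
  have := rp_del1 hn
  have := rp_kap
  unfold lam; positivity

lemma rp_lamn {n : ℕ} (hn : 2 ≤ n) :
    (2 * kap) ^ n * lam n ^ n = lam n * (del n * (del n + 1)) := by
  have h1 := rp_del1 hn
  have h2 := rp_kap
  have hN : (2 : ℝ) ≤ n := by exact_mod_cast hn
  have h : lam n ^ (n - 1) = del n * (del n + 1) / (2 * kap) ^ n := by
    unfold lam
    rw [← Real.rpow_natCast (_ ^ (1 / ((n : ℝ) - 1))), ← Real.rpow_mul (by positivity)]
    rw [Nat.cast_sub (by omega), Nat.cast_one, one_div, inv_mul_cancel₀ (by linarith), Real.rpow_one]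
  obtain ⟨m, rfl⟩ : ∃ m, n = m + 1 := ⟨n - 1, by omega⟩
  rw [pow_succ (lam _)]
  rw [Nat.add_sub_cancel] at h
  rw [h]
  field_simp

lemma rp_key {n : ℕ} (hn : 2 ≤ n) {x : ℝ} (hx : 0 < x) :
    (2 * kap * x * (lam n * x ^ (-del n))) ^ n
      = lam n * del n * (del n + 1) * x ^ (-del n) / x ^ 2 := by
  have e : (x * x ^ (-del n)) ^ n = x ^ (-del n) / x ^ 2 := by
    rw [← Real.rpow_sub_natCast hx.ne', ← Real.rpow_one_add' hx.le (by linarith [rp_del1 hn]),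
      ← Real.rpow_natCast, ← Real.rpow_mul hx.le]
    congr 1
    have := rp_del hn
    push_cast
    linarith
  calc _ = ((2 * kap) ^ n * lam n ^ n) * (x * x ^ (-del n)) ^ n := by
        rw [← mul_pow, ← mul_pow]; ring
    _ = _ := by rw [e, rp_lamn hn]; ring

structure RPData (n : ℕ) (η η1 : ℝ → ℝ) : Prop where
  cont : ContinuousOn η (Ici 0)
  pos : ∀ z ≥ 0, 0 < η z
  d1 : ∀ z > 0, HasDerivAt η (η1 z) z
  d2 : ∀ z > 0, HasDerivAt η1 ((2 * kap * z * η z + (η z) ^ 2) ^ n) z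
  lim : Tendsto η atTop (𝓝 0)

lemma rp_data {n : ℕ} {η : ℝ → ℝ} (h : IsReactiveProfile n η) :
    RPData n η (derivWithin η (Ici 0)) := by
  obtain ⟨hc, hp, he, -, hl⟩ := h
  have hu : UniqueDiffOn ℝ (Ici (0 : ℝ)) := uniqueDiffOn_Ici 0
  have hd1 : ContDiffOn ℝ 1 (derivWithin η (Ici 0)) (Ici 0) :=
    hc.derivWithin hu (by norm_num)
  refine ⟨hc.continuousOn, hp, fun z hz => ?_, fun z hz => ?_, hl⟩
  · exact ((hc.differentiableOn (by norm_num) z hz.le).hasDerivWithinAt).hasDerivAt (Ici_mem_nhds hz)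
  · rw [← he z hz.le]
    exact ((hd1.differentiableOn (by norm_num) z hz.le).hasDerivWithinAt).hasDerivAt
      (Ici_mem_nhds hz)

lemma rp_upper {n : ℕ} (hn : 2 ≤ n) {η η1 : ℝ → ℝ} (h : RPData n η η1) :
    ∀ z > 0, η z ≤ lam n * z ^ (-del n) := by
  intro z hz
  have hl := rp_lam hn
  have hd := rp_del1 hn
  have hk := rp_kap
  obtain ⟨x, hx, hxm⟩ := isCompact_Icc.exists_isMaxOn (s := Icc 0 z) (f := η)
    ⟨z, hz.le, le_rfl⟩ (h.cont.mono Icc_subset_Ici_self)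
  have ht : Tendsto (fun y : ℝ => lam n * y ^ (-del n)) (𝓝[>] 0) atTop :=
    (tendsto_rpow_neg_nhdsGT_zero (by linarith)).const_mul_atTop hl
  obtain ⟨y, hy1, hy2, hy3⟩ := ((ht.eventually_ge_atTop (η x)).and
    (Ioo_mem_nhdsGT hz)).exists
  have hyz : η y ≤ η x := hxm ⟨hy2.le, hy3.le⟩
  have := rp_comp (Z := y) (f := fun z => η z - lam n * z ^ (-del n))
    (f1 := fun z => η1 z - lam n * (-del n) * z ^ (-del n - 1))
    (f2 := fun z => (2 * kap * z * η z + (η z) ^ 2) ^ n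
      - lam n * del n * (del n + 1) * z ^ (-del n) / z ^ 2)
    (fun z hz => by
      have hz0 : 0 < z := lt_of_lt_of_le hy2 hz
      exact ((h.d1 z hz0).sub (rp_d1 _ _ hz0)).continuousAt.continuousWithinAt)
    (fun z hz => (h.d1 z (hy2.trans hz)).sub (rp_d1 _ _ (hy2.trans hz)))
    (fun z hz => (h.d2 z (hy2.trans hz)).sub (rp_d2 _ _ (hy2.trans hz)))
    (by simpa using h.lim.sub (rp_t0 (lam n) (by linarith : 0 < del n)))
    (by linarith)
    (fun z hz hf => by
      have hz0 : 0 < z := hy2.trans hz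
      have hp := h.pos z hz0.le
      rw [← rp_key hn hz0, sub_pos]
      apply pow_lt_pow_left₀ _ (by positivity) (by omega)
      have : 2 * kap * z * (lam n * z ^ (-del n)) < 2 * kap * z * η z :=
        mul_lt_mul_of_pos_left (by linarith) (by positivity)
      nlinarith) z hy3.le
  linarith

lemma rp_lower {n : ℕ} (hn : 2 ≤ n) {η η1 : ℝ → ℝ} (h : RPData n η η1) :
    ∃ a > 0, ∀ z ≥ 0, lam n * (z + a) ^ (-del n) ≤ η z := by
  have hl := rp_lam hn
  have hd := rp_del1 hn
  have hk := rp_kap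
  have ht := rp_t0 (lam n) (by linarith : 0 < del n)
  obtain ⟨a, ⟨ha1, ha2⟩, ha3⟩ := (((ht.eventually (gt_mem_nhds (h.pos 0 le_rfl))).and
    (ht.eventually (gt_mem_nhds (by linarith : 0 < 2 * kap)))).and (eventually_ge_atTop 1)).exists
  have ha0 : 0 < a := by linarith
  refine ⟨a, ha0, ?_⟩
  intro z hz
  have := rp_comp (Z := 0) (f := fun z => lam n * (z + a) ^ (-del n) - η z)
    (f1 := fun z => lam n * (-del n) * (z + a) ^ (-del n - 1) - η1 z)
    (f2 := fun z => lam n * del n * (del n + 1) * (z + a) ^ (-del n) / (z + a) ^ 2 -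
      (2 * kap * z * η z + (η z) ^ 2) ^ n)
    (by
      refine ContinuousOn.sub ?_ h.cont
      intro z hz
      have hz0 : 0 < z + a := add_pos_of_nonneg_of_pos hz ha0
      exact ((rp_d1 (lam n) (del n) hz0).comp_add_const z a).continuousAt.continuousWithinAt)
    (fun z hz => ((rp_d1 (lam n) (del n) (add_pos hz ha0)).comp_add_const z a).sub (h.d1 z hz))
    (fun z hz => ((rp_d2 (lam n) (del n) (add_pos hz ha0)).comp_add_const z a).sub (h.d2 z hz))
    (by simpa using (ht.comp (tendsto_atTop_add_const_right _ a tendsto_id)).sub h.lim)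
    (by simp only [zero_add]; linarith)
    (fun z hz hf => by
      have hza : 0 < z + a := add_pos hz ha0
      have hp := h.pos z hz.le
      rw [← rp_key hn hza, sub_pos]
      apply pow_lt_pow_left₀ _ (by positivity) (by omega)
      set w := lam n * (z + a) ^ (-del n) with hw
      have hw0 : 0 < w := by positivity
      have hwa : w ≤ 2 * kap * a := by
        have : w ≤ lam n * a ^ (-del n) := by
          apply mul_le_mul_of_nonneg_left _ hl.le
          exact Real.rpow_le_rpow_of_nonpos ha0 (by linarith) (by linarith)
        nlinarith
      have hf' : η z < w := by linarith
      have hk2 : 0 < 2 * kap * z := by positivity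
      calc 2 * kap * z * η z + η z ^ 2 = η z * (2 * kap * z + η z) := by ring
        _ < w * (2 * kap * z + w) := by
            apply mul_lt_mul'' hf' (by linarith) hp.le (by positivity)
        _ ≤ w * (2 * kap * z + 2 * kap * a) := by
            apply mul_le_mul_of_nonneg_left _ hw0.le; linarith
        _ = 2 * kap * (z + a) * w := by ring) z hz
  linarith

lemma rp_v1 {n : ℕ} (hn : 2 ≤ n) {η η1 : ℝ → ℝ} (h : RPData n η η1) :
    ∃ K ≥ 0, ∀ z ≥ 1, |η z - lam n * z ^ (-del n)| ≤ K * z ^ (-(del n + 1)) := by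
  have hl := rp_lam hn
  have hd := rp_del1 hn
  obtain ⟨a, ha, hlow⟩ := rp_lower hn h
  refine ⟨lam n * (del n * a), by positivity, fun z hz => ?_⟩
  have hz0 : 0 < z := by linarith
  have hza : 0 < z + a := by linarith
  have hu := rp_upper hn h z hz0
  have hw := hlow z hz0.le
  rw [abs_sub_comm, abs_of_nonneg (by linarith)]
  have hb := one_add_mul_self_le_rpow_one_add (s := - (a / (z + a)))
    (by rw [neg_le_neg_iff, div_le_one hza]; linarith) hd.le
  have e1 : 1 + -(a / (z + a)) = z / (z + a) := by field_simp; ring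
  rw [e1, Real.div_rpow hz0.le hza.le] at hb
  have h3 : a / (z + a) ≤ a / z := by gcongr; linarith
  have h4 : 1 - del n * (a / z) ≤ z ^ del n / (z + a) ^ del n := by
    have := mul_le_mul_of_nonneg_left h3 (by linarith : 0 ≤ del n)
    linarith
  have h5 : z ^ (-del n) * (1 - del n * (a / z)) ≤ (z + a) ^ (-del n) := by
    have := mul_le_mul_of_nonneg_left h4 (by positivity : 0 ≤ z ^ (-del n))
    refine this.trans (le_of_eq ?_)
    rw [Real.rpow_neg hz0.le, Real.rpow_neg hza.le]
    field_simp
  have e2 : z ^ (-(del n + 1)) = z ^ (-del n) / z := by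
    rw [show -(del n + 1) = -del n - 1 by ring, Real.rpow_sub_one hz0.ne']
  rw [e2]
  have h6 := mul_le_mul_of_nonneg_left h5 hl.le
  have e3 : lam n * (z ^ (-del n) * (1 - del n * (a / z)))
    = lam n * z ^ (-del n) - lam n * (del n * a) * (z ^ (-del n) / z) := by ring
  linarith

lemma rp_brk (n : ℕ) (K : ℝ) (hK : 0 ≤ K) : ∃ C ≥ 0, ∀ r e t : ℝ, |r| ≤ 1 → |r| ≤ K * t → 0 ≤ e →
    e ≤ K * t → 0 ≤ t → t ≤ 1 →
    |(1 + (r + e * (1 + r) ^ 2)) ^ n - 1 - n * r - n * e| ≤ C * t ^ 2 := by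
  obtain ⟨C, hC, h⟩ := rp_taylor n (5 * K) (by positivity)
  refine ⟨C * (5 * K) ^ 2 + n * (3 * K ^ 2), by positivity, ?_⟩
  intro r e t hr1 hr he0 he ht0 ht1
  obtain ⟨hra, hrb⟩ := abs_le.1 hr1
  set X := r + e * (1 + r) ^ 2 with hX
  have hX5 : |X| ≤ 5 * K * t := by
    have h1 : |e * (1 + r) ^ 2| ≤ K * t * 4 := by
      rw [abs_of_nonneg (by positivity)]
      apply mul_le_mul he (by nlinarith) (by positivity) (by positivity)
    have := abs_add_le r (e * (1 + r) ^ 2)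
    linarith
  have hT := h X (hX5.trans (by nlinarith))
  have hXs : X ^ 2 ≤ (5 * K * t) ^ 2 := by
    rw [← sq_abs X]; exact pow_le_pow_left₀ (abs_nonneg _) hX5 2
  have e1 : (1 + X) ^ n - 1 - n * r - n * e = ((1 + X) ^ n - 1 - n * X) + n * (e * (r * (2 + r))) := by
    rw [hX]; ring
  rw [e1]
  refine (abs_add_le _ _).trans ?_
  have h2 : |(n : ℝ) * (e * (r * (2 + r)))| ≤ n * (K * t * (K * t * 3)) := by
    rw [abs_mul, abs_mul, abs_mul, Nat.abs_cast, abs_of_nonneg he0]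
    have : |2 + r| ≤ 3 := by rw [abs_le]; constructor <;> linarith
    gcongr
  have h3 := mul_le_mul_of_nonneg_left hXs hC
  nlinarith

lemma rp_G {n : ℕ} (hn : 2 ≤ n) {η η1 : ℝ → ℝ} (h : RPData n η η1) {K q : ℝ} (hK : 0 ≤ K)
    (hq : 0 ≤ q) (hq2 : q ≤ del n + 1)
    (hv : ∀ z ≥ 1, |η z - lam n * z ^ (-del n)| ≤ K * z ^ (-(del n + q))) :
    ∃ K' ≥ 0, ∀ z ≥ 1, |((2 * kap * z * η z + (η z) ^ 2) ^ n
      - lam n * del n * (del n + 1) * z ^ (-del n) / z ^ 2)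
      - (n * (del n * (del n + 1))) * (η z - lam n * z ^ (-del n)) / z ^ 2
      - (n * (lam n * del n * (del n + 1)) * (lam n / (2 * kap))) * z ^ (-(2 * del n + 1)) / z ^ 2|
      ≤ K' * z ^ (-(del n + 2 * q)) / z ^ 2 := by
  have hl := rp_lam hn
  have hd := rp_del1 hn
  have hk := rp_kap
  obtain ⟨C, hC, hb⟩ := rp_brk n (K / lam n + lam n / (2 * kap)) (by positivity)
  refine ⟨lam n * del n * (del n + 1) * C, by positivity, fun z hz => ?_⟩
  have hz0 : 0 < z := by linarith
  have hp := h.pos z hz0.le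
  have hu := rp_upper hn h z hz0
  set Y := z ^ (-del n) with hY
  have hY0 : 0 < Y := by positivity
  set t := z ^ (-q) with ht
  have ht0 : 0 < t := by positivity
  have ht1 : t ≤ 1 := Real.rpow_le_one_of_one_le_of_nonpos hz (by linarith)
  obtain ⟨r, hr⟩ : ∃ r, η z = lam n * Y * (1 + r) := ⟨η z / (lam n * Y) - 1, by field_simp; ring⟩
  obtain ⟨e, he⟩ : ∃ e, e = lam n * Y / (2 * kap * z) := ⟨_, rfl⟩
  have hlY : 0 < lam n * Y := by positivity
  have hr0 : r ≤ 0 := by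
    by_contra! hc
    nlinarith [mul_pos hlY hc]
  have hr1 : -1 < r := by
    by_contra! hc
    nlinarith [mul_nonneg hlY.le (by linarith : 0 ≤ -1 - r)]
  have hvr : η z - lam n * Y = lam n * Y * r := by rw [hr]; ring
  have hYt : z ^ (-(del n + q)) = Y * t := by
    rw [neg_add, Real.rpow_add hz0]
  have hYt2 : z ^ (-(del n + 2 * q)) = Y * t ^ 2 := by
    rw [show -(del n + 2 * q) = -del n + -q + -q by ring, Real.rpow_add hz0, Real.rpow_add hz0]
    ring
  have hYY : z ^ (-(2 * del n + 1)) = Y * (Y / z) := by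
    rw [show -(2 * del n + 1) = -del n + (-del n - 1) by ring, Real.rpow_add hz0,
      Real.rpow_sub_one hz0.ne']
  have hYz : Y / z ≤ t := by
    rw [hY, ← Real.rpow_sub_one hz0.ne']
    exact Real.rpow_le_rpow_of_exponent_le hz (by linarith)
  have hrK : |r| ≤ (K / lam n + lam n / (2 * kap)) * t := by
    have h1 := hv z hz
    rw [← hY, hvr, hYt, abs_mul, abs_of_pos hlY] at h1
    have h2 : |r| ≤ K / lam n * t := by
      rw [div_mul_eq_mul_div, le_div_iff₀ hl]
      have : Y * (|r| * lam n) ≤ Y * (K * t) := by linarith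
      exact le_of_mul_le_mul_left this hY0
    have : 0 ≤ lam n / (2 * kap) * t := by positivity
    linarith
  have heE : e = lam n / (2 * kap) * (Y / z) := by rw [he]; field_simp
  have heK : e ≤ (K / lam n + lam n / (2 * kap)) * t := by
    have h1 := mul_le_mul_of_nonneg_left hYz (by positivity : 0 ≤ lam n / (2 * kap))
    have : 0 ≤ K / lam n * t := by positivity
    rw [heE]; linarith
  have hB := hb r e t (abs_le.2 ⟨by linarith, by linarith⟩) hrK (by rw [he]; positivity) heK
    ht0.le ht1
  have hF : (2 * kap * z * η z + (η z) ^ 2) ^ n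
      = lam n * del n * (del n + 1) * Y / z ^ 2 * (1 + (r + e * (1 + r) ^ 2)) ^ n := by
    rw [hY, ← rp_key hn hz0, ← mul_pow, ← hY]
    congr 1
    rw [hr, he]; field_simp; ring
  rw [hF, hvr, hYt2, hYY]
  have e5 : lam n * del n * (del n + 1) * Y / z ^ 2 * (1 + (r + e * (1 + r) ^ 2)) ^ n
      - lam n * del n * (del n + 1) * Y / z ^ 2
      - (n * (del n * (del n + 1))) * (lam n * Y * r) / z ^ 2
      - (n * (lam n * del n * (del n + 1)) * (lam n / (2 * kap))) * (Y * (Y / z)) / z ^ 2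
      = (lam n * del n * (del n + 1) * Y / z ^ 2) *
        ((1 + (r + e * (1 + r) ^ 2)) ^ n - 1 - n * r - n * e) := by
    rw [heE]; ring
  rw [e5, abs_mul, abs_of_pos (by positivity)]
  refine (mul_le_mul_of_nonneg_left hB (by positivity)).trans (le_of_eq ?_)
  ring

lemma rp_lt_of {x p : ℝ} (hp : 0 < p) (h : x * (x + 1) < p * (p + 1)) : x < p := by
  by_contra! hc
  nlinarith

lemma rp_weak {A K A' b c a z : ℝ} {g : ℝ} (hz : 1 ≤ z) (hA : |A| ≤ A') (hK : 0 ≤ K) (hab : a ≤ b)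
    (hac : a ≤ c) (hg : |g - A * z ^ (-b) / z ^ 2| ≤ K * z ^ (-c) / z ^ 2) :
    |g| ≤ (A' + K) * z ^ (-a) / z ^ 2 := by
  have hz0 : 0 < z := by linarith
  have h1 : z ^ (-b) ≤ z ^ (-a) := Real.rpow_le_rpow_of_exponent_le hz (by linarith)
  have h2 : z ^ (-c) ≤ z ^ (-a) := Real.rpow_le_rpow_of_exponent_le hz (by linarith)
  have h3 : |A * z ^ (-b) / z ^ 2| ≤ A' * z ^ (-a) / z ^ 2 := by
    have : 0 ≤ A' := (abs_nonneg _).trans hA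
    rw [abs_div, abs_mul, abs_of_pos (by positivity : 0 < z ^ (-b)),
      abs_of_pos (by positivity : 0 < z ^ 2)]
    gcongr
  have h4 : K * z ^ (-c) / z ^ 2 ≤ K * z ^ (-a) / z ^ 2 := by gcongr
  have h5 := abs_add_le (g - A * z ^ (-b) / z ^ 2) (A * z ^ (-b) / z ^ 2)
  rw [sub_add_cancel] at h5
  have e : (A' + K) * z ^ (-a) / z ^ 2 = A' * z ^ (-a) / z ^ 2 + K * z ^ (-a) / z ^ 2 := by ring
  linarith

lemma rp_lim_of_bound {v : ℝ → ℝ} {B M a b : ℝ} (hab : b < a)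
    (h : ∀ z ≥ 1, |v z - B * z ^ (-b)| ≤ M * z ^ (-a)) :
    Tendsto (fun z => z ^ b * v z) atTop (𝓝 B) := by
  rw [tendsto_iff_norm_sub_tendsto_zero]
  refine squeeze_zero' (Eventually.of_forall fun _ => norm_nonneg _) ?_
    (rp_t0 M (by linarith : 0 < a - b))
  filter_upwards [eventually_ge_atTop 1] with z hz
  have hz0 : 0 < z := by linarith
  have e1 : z ^ b * v z - B = z ^ b * (v z - B * z ^ (-b)) := by
    have : z ^ b * z ^ (-b) = 1 := by rw [← Real.rpow_add hz0]; simp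
    linear_combination B * this
  rw [Real.norm_eq_abs, e1, abs_mul, abs_of_pos (by positivity : 0 < z ^ b)]
  refine (mul_le_mul_of_nonneg_left (h z hz) (by positivity)).trans (le_of_eq ?_)
  rw [show -(a - b) = b + -a by ring, Real.rpow_add hz0]; ring

theorem reactive_profile_asymptotics_at_infinity (n : ℕ) (hn : 2 ≤ n)
    (η : ℝ → ℝ) (hη : IsReactiveProfile n η) :
    Filter.Tendsto (fun z : ℝ => z ^ del n * η z) Filter.atTop (nhds (lam n)) ∧
    ∃ lamInf : ℝ,
      Filter.Tendsto (fun z : ℝ => z ^ delp n * (η z - lam n * z ^ (-(del n))))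
        Filter.atTop (nhds lamInf) := by
  have h := rp_data hη
  have hl := rp_lam hn
  have hd := rp_del1 hn
  have hdd := rp_del hn
  have hk := rp_kap
  have hN : (2 : ℝ) ≤ n := by exact_mod_cast hn
  obtain ⟨K, hK, hv⟩ := rp_v1 hn h
  refine ⟨rp_lim_of_bound (by linarith : del n < del n + 1) hv, ?_⟩
  -- the exponent p
  obtain ⟨p, hpdef⟩ : ∃ p, p = (Real.sqrt (4 * (n : ℝ) * del n * (del n + 1) + 1) - 1) / 2 := ⟨_, rfl⟩
  have hQpos : 0 < (n : ℝ) * (del n * (del n + 1)) := by positivity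
  have hpp : p * (p + 1) = n * (del n * (del n + 1)) := by
    have := Real.sq_sqrt (by nlinarith : 0 ≤ 4 * (n : ℝ) * del n * (del n + 1) + 1)
    rw [hpdef]; nlinarith
  have hp0 : 0 < p := by
    have : 1 < Real.sqrt (4 * (n : ℝ) * del n * (del n + 1) + 1) := by
      rw [Real.lt_sqrt (by norm_num)]; nlinarith
    rw [hpdef]; linarith
  -- derivatives of v
  obtain ⟨v, hvdef⟩ : ∃ v : ℝ → ℝ, v = fun z => η z - lam n * z ^ (-del n) := ⟨_, rfl⟩
  obtain ⟨v1, hv1def⟩ : ∃ v1 : ℝ → ℝ, v1 = fun z => derivWithin η (Ici 0) z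
    - lam n * (-del n) * z ^ (-del n - 1) := ⟨_, rfl⟩
  obtain ⟨v2, hv2def⟩ : ∃ v2 : ℝ → ℝ, v2 = fun z => (2 * kap * z * η z + (η z) ^ 2) ^ n
      - lam n * del n * (del n + 1) * z ^ (-del n) / z ^ 2 := ⟨_, rfl⟩
  have hd1 : ∀ z > 0, HasDerivAt v (v1 z) z := by
    intro z hz; rw [hvdef, hv1def]; exact (h.d1 z hz).sub (rp_d1 _ _ hz)
  have hd2 : ∀ z > 0, HasDerivAt v1 (v2 z) z := by
    intro z hz; rw [hv2def, hv1def]; exact (h.d2 z hz).sub (rp_d2 _ _ hz)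
  have hv0 : Tendsto v atTop (𝓝 0) := by
    rw [hvdef]; simpa using h.lim.sub (rp_t0 (lam n) (by linarith : 0 < del n))
  obtain ⟨A, hA⟩ : ∃ A, A = n * (lam n * del n * (del n + 1)) * (lam n / (2 * kap)) := ⟨_, rfl⟩
  have hG : ∀ K ≥ 0, ∀ q, 0 ≤ q → q ≤ del n + 1 → (∀ z ≥ 1, |v z| ≤ K * z ^ (-(del n + q))) →
      ∃ K' ≥ 0, ∀ z ≥ 1, |v2 z - p * (p + 1) * v z / z ^ 2 - A * z ^ (-(2 * del n + 1)) / z ^ 2|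
        ≤ K' * z ^ (-(del n + 2 * q)) / z ^ 2 := by
    intro K hK q hq hq2 hb
    rw [hvdef] at hb
    rw [hpp, hvdef, hv2def, hA]
    exact rp_G hn h hK hq hq2 hb
  obtain ⟨K1, hK1, hg1⟩ := hG K hK 1 (by norm_num) (by linarith) (by rw [hvdef]; exact hv)
  have hp32 : del n + 3 / 2 < p := by
    apply rp_lt_of hp0
    rw [hpp]
    nlinarith
  obtain ⟨M, hM, hv32⟩ := rp_bound (by linarith : 0 < del n + 3 / 2) hp32
    (by positivity : 0 ≤ |A| + K1) hd1 hd2 hv0 (fun z hz => rp_weak hz le_rfl hK1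
      (by linarith) (by linarith) (hg1 z hz))
  obtain ⟨K2, hK2, hg2⟩ := hG M hM (3 / 2) (by norm_num) (by linarith) hv32
  rw [show del n + 2 * (3 / 2) = del n + 3 by ring] at hg2
  by_cases h5 : n ≤ 5
  · have e : delp n = p := by unfold delp; rw [if_pos h5, hpdef]
    rw [e]
    have hlt : p < del n + 3 ∧ p < 2 * del n + 1 := by
      constructor <;> apply rp_lt_of (by linarith) <;> rw [hpp] <;>
        interval_cases n <;> norm_num [del]
    have := rp_cauchy hp0 (lt_min hlt.1 hlt.2) (by positivity : 0 ≤ |A| + K2) hd1 hd2 hv0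
      (fun z hz => rp_weak hz le_rfl hK2 (min_le_right _ _) (min_le_left _ _) (hg2 z hz))
    rw [hvdef] at this
    exact this
  · have e : delp n = 2 * del n + 1 := by unfold delp; rw [if_neg h5]
    rw [e]
    have hN6 : (6 : ℝ) ≤ n := by exact_mod_cast (by omega : 6 ≤ n)
    have hd8 : del n ≤ 8 / 5 := by nlinarith
    obtain ⟨b, hb⟩ : ∃ b, b = 2 * del n + 1 := ⟨_, rfl⟩
    rw [← hb] at hg2 ⊢
    have hbb : b * (b + 1) < p * (p + 1) := by
      rw [hpp, hb]; nlinarith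
    have hbp : b < p := rp_lt_of hp0 hbb
    obtain ⟨a, ha1, ha2⟩ := exists_between (lt_min hbp (by linarith : b < del n + 3))
    obtain ⟨B, hB⟩ : ∃ B, B = A / (b * (b + 1) - p * (p + 1)) := ⟨_, rfl⟩
    have hBA : B * (b * (b + 1) - p * (p + 1)) = A := by
      rw [hB]; exact div_mul_cancel₀ _ (by linarith)
    have ha3 := ha2.trans_le (min_le_left _ _)
    have ha4 := ha2.trans_le (min_le_right _ _)
    obtain ⟨M', hM', hfin⟩ := rp_bound (v := fun z => v z - B * z ^ (-b))
      (by linarith : 0 < a) ha3 hK2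
      (fun z hz => (hd1 z hz).sub (rp_d1 B b hz)) (fun z hz => (hd2 z hz).sub (rp_d2 B b hz))
      (by simpa using hv0.sub (rp_t0 B (by linarith : 0 < b)))
      (fun z hz => by
        have h1 := hg2 z hz
        have h2 : z ^ (-(del n + 3)) ≤ z ^ (-a) :=
          Real.rpow_le_rpow_of_exponent_le hz (by linarith)
        have h3 : K2 * z ^ (-(del n + 3)) / z ^ 2 ≤ K2 * z ^ (-a) / z ^ 2 := by gcongr
        refine le_trans (le_of_eq ?_) (h1.trans h3)
        rw [← hBA]
        congr 1
        ring)
    refine ⟨B, ?_⟩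
    have := rp_lim_of_bound ha1 hfin
    rw [hvdef] at this
    exact this
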